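/- Let φ : ℝ^m → ℝ^n be smooth with Δ³φ = 0, suppose ∫_{ℝ^m} (|dφ|² + |∇dφ|² + |∇²dφ|²) dx < ∞, and m > 2 with m ≠ 6. Then φ is constant. -/

import Mathlib

open MeasureTheory

/-- The partial derivative in the `i`-th coordinate direction. -/
noncomputable def pd {m : ℕ} {E : Type*} [NormedAddCommGroup E] [NormedSpace ℝ E]
    (i : Fin m) (f : (Fin m → ℝ) → E) (x : Fin m → ℝ) : E :=
  fderiv ℝ f x (Pi.single i 1)

/-- Euclidean inner product on `Fin n → ℝ`. -/
def dot {n : ℕ} (v w : Fin n → ℝ) : ℝ := ∑ α, v α * w α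
/-- The componentwise Euclidean Laplacian `Δ = ∑ᵢ ∂ᵢ²`. -/
noncomputable def lap {m n : ℕ} (f : (Fin m → ℝ) → Fin n → ℝ) :
    (Fin m → ℝ) → Fin n → ℝ :=
  fun x => ∑ i, pd i (pd i f) x

section TriharmonicHelpers

/-- Smooth cut-off functions with gradient bounded by `c`. -/
structure IsCut {m : ℕ} (c : ℝ) (η : (Fin m → ℝ) → ℝ) : Prop where
  smooth : ContDiff ℝ (⊤ : ℕ∞) η
  supp : HasCompactSupport η
  nonneg : ∀ x, 0 ≤ η x
  le_one : ∀ x, η x ≤ 1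
  grad : ∀ i x, |pd i η x| ≤ c

theorem pd_smooth {m : ℕ} {E : Type*} [NormedAddCommGroup E] [NormedSpace ℝ E]
    {f : (Fin m → ℝ) → E} (hf : ContDiff ℝ (⊤ : ℕ∞) f) (i : Fin m) :
    ContDiff ℝ (⊤ : ℕ∞) (pd i f) := by
  have h : ContDiff ℝ (⊤ : ℕ∞) (fderiv ℝ f) := hf.fderiv_right (by simp)
  exact h.clm_apply contDiff_const

theorem smooth_diff {m : ℕ} {E : Type*} [NormedAddCommGroup E] [NormedSpace ℝ E]
    {f : (Fin m → ℝ) → E} (hf : ContDiff ℝ (⊤ : ℕ∞) f) : Differentiable ℝ f :=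
  hf.differentiable (by simp)

theorem pd_mul {m : ℕ} {f g : (Fin m → ℝ) → ℝ} (hf : ContDiff ℝ (⊤ : ℕ∞) f)
    (hg : ContDiff ℝ (⊤ : ℕ∞) g) (i : Fin m) (x : Fin m → ℝ) :
    pd i (fun y => f y * g y) x = pd i f x * g x + f x * pd i g x := by
  unfold pd
  rw [fderiv_fun_mul (smooth_diff hf x) (smooth_diff hg x)]
  simp
  ring

theorem pd_pow {m : ℕ} {f : (Fin m → ℝ) → ℝ} (hf : ContDiff ℝ (⊤ : ℕ∞) f)
    (p : ℕ) (i : Fin m) (x : Fin m → ℝ) :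
    pd i (fun y => f y ^ p) x = p * f x ^ (p - 1) * pd i f x := by
  unfold pd
  rw [fderiv_fun_pow p (smooth_diff hf x)]
  simp

theorem pd_comm {m : ℕ} {f : (Fin m → ℝ) → ℝ} (hf : ContDiff ℝ (⊤ : ℕ∞) f)
    (i j : Fin m) (x : Fin m → ℝ) : pd i (pd j f) x = pd j (pd i f) x := by
  have key : ∀ a b : Fin m, pd a (pd b f) x
      = fderiv ℝ (fderiv ℝ f) x (Pi.single a 1) (Pi.single b 1) := by
    intro a b
    have h : ContDiff ℝ (⊤ : ℕ∞) (fderiv ℝ f) := hf.fderiv_right (by simp)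
    unfold pd
    rw [fderiv_clm_apply (h.differentiable (by simp) x) (differentiableAt_const _)]
    simp
  rw [key, key]
  exact (hf.contDiffAt.isSymmSndFDerivAt (by
    simp only [minSmoothness_of_isRCLikeNormedField]
    exact WithTop.coe_le_coe.2 (le_top : (2 : ℕ∞) ≤ ⊤))) _ _

theorem pd_comp {m n : ℕ} {f : (Fin m → ℝ) → Fin n → ℝ} (hf : ContDiff ℝ (⊤ : ℕ∞) f)
    (i : Fin m) (α : Fin n) : (fun x => pd i f x α) = pd i (fun y => f y α) := by
  funext x
  unfold pd
  rw [fderiv_apply (smooth_diff hf x)]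
  rfl

theorem pd_sum {m : ℕ} {f : Fin m → (Fin m → ℝ) → ℝ} (hf : ∀ j, ContDiff ℝ (⊤ : ℕ∞) (f j))
    (i : Fin m) (x : Fin m → ℝ) :
    pd i (fun y => ∑ j, f j y) x = ∑ j, pd i (f j) x := by
  unfold pd
  rw [fderiv_fun_sum (fun j _ => smooth_diff (hf j) x)]
  simp

theorem IsCut.integrable {m : ℕ} {c : ℝ} {η : (Fin m → ℝ) → ℝ} (h : IsCut c η)
    {G : (Fin m → ℝ) → ℝ} (hG : Continuous G) : Integrable (fun x => η x * G x) :=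
  (h.smooth.continuous.mul hG).integrable_of_hasCompactSupport h.supp.mul_right

theorem integral_pd_eq_zero {m : ℕ} {F : (Fin m → ℝ) → ℝ} (hF : ContDiff ℝ (⊤ : ℕ∞) F)
    (hc : HasCompactSupport F) (i : Fin m) : ∫ x, pd i F x = 0 := by
  have hi : Integrable (fun x => pd i F x) := by
    refine (pd_smooth hF i).continuous.integrable_of_hasCompactSupport ?_
    exact hc.fderiv_apply (𝕜 := ℝ) _
  have := integral_mul_fderiv_eq_neg_fderiv_mul_of_integrable (μ := (volume : Measure (Fin m → ℝ)))
    (f := fun _ => (1 : ℝ)) (g := F) (v := Pi.single i 1) (by simp)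
    (by simpa [pd] using hi)
    (by simpa using hF.continuous.integrable_of_hasCompactSupport hc)
    (fun x _ => by fun_prop) (fun x _ => smooth_diff hF x)
  simpa [pd] using this

theorem exists_cut {m : ℕ} (N c : ℝ) (hc : 0 < c) :
    ∃ η : (Fin m → ℝ) → ℝ, IsCut c η ∧ ∀ x, ‖x‖ ≤ N → η x = 1 := by
  let ρ : ContDiffBump (0 : Fin m → ℝ) := ⟨1, 2, one_pos, one_lt_two⟩
  have hρ : ContDiff ℝ (⊤ : ℕ∞) ρ := ρ.contDiff
  have hb : ∀ i, ∃ C, ∀ x, ‖pd i ρ x‖ ≤ C := fun i =>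
    HasCompactSupport.exists_bound_of_continuous (ρ.hasCompactSupport.fderiv_apply (𝕜 := ℝ) _)
      (pd_smooth hρ i).continuous
  choose C hC using hb
  let M : ℝ := ∑ i, |C i|
  have hM0 : 0 ≤ M := Finset.sum_nonneg fun i _ => abs_nonneg _
  have hM : ∀ i x, |pd i ρ x| ≤ M := fun i x =>
    ((hC i x).trans (le_abs_self _)).trans
      (Finset.single_le_sum (f := fun i => |C i|) (fun i _ => abs_nonneg _) (Finset.mem_univ i))
  let R : ℝ := |N| + 1 + M / c
  have hR : 0 < R := by positivity
  have hRN : N ≤ R := by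
    have := le_abs_self N
    have : 0 ≤ M / c := by positivity
    simp only [R]; linarith
  have hRM : R⁻¹ * M ≤ c := by
    rw [inv_mul_le_iff₀ hR]
    have : M / c ≤ R := by simp only [R]; have := abs_nonneg N; linarith
    rwa [div_le_iff₀ hc] at this
  refine ⟨fun x => ρ (R⁻¹ • x), ⟨?_, ?_, ?_, ?_, ?_⟩, ?_⟩
  · exact hρ.comp (contDiff_const_smul _)
  · exact ρ.hasCompactSupport.comp_smul (inv_ne_zero hR.ne')
  · exact fun x => ρ.nonneg
  · exact fun x => ρ.le_one
  · intro i x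
    have : pd i (fun x => ρ (R⁻¹ • x)) x = R⁻¹ * pd i ρ (R⁻¹ • x) := by
      unfold pd
      rw [fderiv_comp_smul]
      simp
    rw [this, abs_mul, abs_of_pos (inv_pos.2 hR)]
    exact (mul_le_mul_of_nonneg_left (hM i _) (inv_pos.2 hR).le).trans hRM
  · intro x hx
    apply ρ.one_of_mem_closedBall
    rw [mem_closedBall_zero_iff, norm_smul, norm_inv, Real.norm_of_nonneg hR.le,
      inv_mul_le_iff₀ hR]
    simpa [ρ] using hx.trans hRN

theorem eq_zero_of_cut {m : ℕ} (F : (Fin m → ℝ) → ℝ) (hF : Continuous F) (h0 : ∀ x, 0 ≤ F x)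
    (K : ℝ) (hK : ∀ c : ℝ, 0 < c → ∀ η : (Fin m → ℝ) → ℝ, IsCut c η →
      ∫ x, η x ^ 4 * F x ≤ K * c ^ 2) : ∀ x, F x = 0 := by
  intro x
  by_contra hx
  obtain ⟨ζ, hζ, hζ1⟩ := exists_cut (m := m) ‖x‖ 1 one_pos
  obtain ⟨N, hN⟩ := hζ.supp.isCompact.isBounded.exists_norm_le
  have hint : ∀ {c : ℝ} {η : (Fin m → ℝ) → ℝ}, IsCut c η →
      Integrable (fun x => η x ^ 4 * F x) := by
    intro c η h
    have := h.integrable (G := fun x => η x ^ 3 * F x)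
      ((h.smooth.continuous.pow 3).mul hF)
    refine this.congr (Filter.Eventually.of_forall fun x => ?_)
    simp only
    ring
  have hpos : 0 < ∫ y, ζ y ^ 4 * F y := by
    refine Continuous.integral_pos_of_hasCompactSupport_nonneg_nonzero (x := x)
      ((hζ.smooth.continuous.pow 4).mul hF) ?_ ?_ ?_
    · apply HasCompactSupport.mul_right
      exact hζ.supp.comp_left (g := fun t : ℝ => t ^ 4) (by simp)
    · exact fun y => mul_nonneg (by positivity) (h0 y)
    · simp [hζ1 x le_rfl, hx]
  have hle : ∀ c : ℝ, 0 < c → ∫ y, ζ y ^ 4 * F y ≤ K * c ^ 2 := by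
    intro c hc
    obtain ⟨η, hη, hη1⟩ := exists_cut (m := m) N c hc
    refine le_trans (integral_mono (hint hζ) (hint hη) fun y => ?_) (hK c hc η hη)
    apply mul_le_mul_of_nonneg_right _ (h0 y)
    by_cases hy : y ∈ tsupport ζ
    · rw [hη1 y (hN y hy)]
      exact pow_le_pow_left₀ (hζ.nonneg y) (hζ.le_one y) 4
    · rw [image_eq_zero_of_notMem_tsupport hy]
      simpa using pow_nonneg (hη.nonneg y) 4
  have hlim : Filter.Tendsto (fun c : ℝ => K * c ^ 2) (nhdsWithin 0 (Set.Ioi 0)) (nhds 0) := by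
    have : Filter.Tendsto (fun c : ℝ => K * c ^ 2) (nhds 0) (nhds (K * 0 ^ 2)) := by
      apply Continuous.tendsto (f := fun c : ℝ => K * c ^ 2)
      fun_prop
    simpa using this.mono_left nhdsWithin_le_nhds
  have := ge_of_tendsto hlim (by
    filter_upwards [self_mem_nhdsWithin] with c hc using hle c hc)
  linarith

/-- Divergence theorem for `ζ u ∇w`. -/
theorem cut_div {m : ℕ} {c : ℝ} {η u w : (Fin m → ℝ) → ℝ} (hη : IsCut c η)
    (hu : ContDiff ℝ (⊤ : ℕ∞) u) (hw : ContDiff ℝ (⊤ : ℕ∞) w) (p : ℕ) :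
    ∫ x, ∑ i, (η x ^ (p + 1) * pd i u x * pd i w x + η x ^ (p + 1) * u x * pd i (pd i w) x
      + (p + 1) * η x ^ p * pd i η x * u x * pd i w x) = 0 := by
  have hs : ∀ i, ContDiff ℝ (⊤ : ℕ∞) (fun x => η x ^ (p + 1) * (u x * pd i w x)) := fun i =>
    (hη.smooth.pow _).mul (hu.mul (pd_smooth hw i))
  have hcs : ∀ i, HasCompactSupport (fun x => η x ^ (p + 1) * (u x * pd i w x)) := fun i => by
    apply HasCompactSupport.mul_right
    exact hη.supp.comp_left (g := fun t : ℝ => t ^ (p + 1)) (by simp)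
  have e : ∀ i x, η x ^ (p + 1) * pd i u x * pd i w x + η x ^ (p + 1) * u x * pd i (pd i w) x
      + (p + 1) * η x ^ p * pd i η x * u x * pd i w x
      = pd i (fun x => η x ^ (p + 1) * (u x * pd i w x)) x := by
    intro i x
    rw [pd_mul (hη.smooth.pow _) (hu.mul (pd_smooth hw i)), pd_mul hu (pd_smooth hw i),
      pd_pow hη.smooth]
    rw [Nat.add_sub_cancel]
    push_cast
    ring
  simp_rw [e]
  rw [integral_finsetSum]
  · exact Finset.sum_eq_zero fun i _ => integral_pd_eq_zero (hs i) (hcs i) i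
  · intro i _
    refine (pd_smooth (hs i) i).continuous.integrable_of_hasCompactSupport ?_
    exact (hcs i).fderiv_apply (𝕜 := ℝ) _

/-- Caccioppoli inequality. -/
theorem caccioppoli {m : ℕ} {c : ℝ} {η u : (Fin m → ℝ) → ℝ} (hη : IsCut c η)
    (hu : ContDiff ℝ (⊤ : ℕ∞) u) (hΔ : ∀ x, ∑ i, pd i (pd i u) x = 0) :
    ∫ x, η x ^ 4 * ∑ i, pd i u x ^ 2 ≤ 16 * m * c ^ 2 * ∫ x, η x ^ 2 * u x ^ 2 := by
  have hc1 := hη.smooth.continuous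
  have hc2 := hu.continuous
  have hc3 := fun i => (pd_smooth hu i).continuous
  have hc4 := fun i => (pd_smooth hη.smooth i).continuous
  have hc5 := fun i => (pd_smooth (pd_smooth hu i) i).continuous
  have hdiv := cut_div hη hu hu 3
  have i1 : Integrable (fun x => η x ^ 4 * ∑ i, pd i u x ^ 2) := by
    refine (hη.integrable (G := fun x => η x ^ 3 * ∑ i, pd i u x ^ 2) (by fun_prop)).congr
      (Filter.Eventually.of_forall fun x => ?_)
    simp only; ring
  have i2 : Integrable (fun x => η x ^ 2 * u x ^ 2) := by
    refine (hη.integrable (G := fun x => η x * u x ^ 2) (by fun_prop)).congr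
      (Filter.Eventually.of_forall fun x => ?_)
    simp only; ring
  have i3 : Integrable (fun x => ∑ i, (η x ^ (3 + 1) * pd i u x * pd i u x
      + η x ^ (3 + 1) * u x * pd i (pd i u) x
      + ((3 : ℕ) + 1) * η x ^ 3 * pd i η x * u x * pd i u x)) := by
    refine (hη.integrable (G := fun x => ∑ i, (η x ^ 3 * pd i u x * pd i u x
      + η x ^ 3 * u x * pd i (pd i u) x
      + ((3 : ℕ) + 1) * η x ^ 2 * pd i η x * u x * pd i u x)) (by fun_prop)).congr
      (Filter.Eventually.of_forall fun x => ?_)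
    simp only [Finset.mul_sum]
    exact Finset.sum_congr rfl fun i _ => by ring
  have hpt : ∀ x, (1 / 2) * (η x ^ 4 * ∑ i, pd i u x ^ 2) ≤
      (∑ i, (η x ^ (3 + 1) * pd i u x * pd i u x
      + η x ^ (3 + 1) * u x * pd i (pd i u) x
      + ((3 : ℕ) + 1) * η x ^ 3 * pd i η x * u x * pd i u x))
      + 8 * m * c ^ 2 * (η x ^ 2 * u x ^ 2) := by
    intro x
    have e1 : ∑ i, (η x ^ (3 + 1) * u x * pd i (pd i u) x) = 0 := by
      rw [← Finset.mul_sum, hΔ x, mul_zero]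
    have e2 : 8 * m * c ^ 2 * (η x ^ 2 * u x ^ 2)
        = ∑ _i : Fin m, 8 * c ^ 2 * (η x ^ 2 * u x ^ 2) := by
      simp; ring
    rw [Finset.sum_add_distrib, Finset.sum_add_distrib, e1, e2, add_zero,
      ← Finset.sum_add_distrib, ← Finset.sum_add_distrib, Finset.mul_sum, Finset.mul_sum]
    refine Finset.sum_le_sum fun i _ => ?_
    have hg : pd i η x ^ 2 ≤ c ^ 2 := sq_le_sq.2 ((hη.grad i x).trans (le_abs_self c))
    have h1 : pd i η x ^ 2 * (η x ^ 2 * u x ^ 2) ≤ c ^ 2 * (η x ^ 2 * u x ^ 2) :=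
      mul_le_mul_of_nonneg_right hg (by positivity)
    have h2 := sq_nonneg (η x ^ 2 * pd i u x + 4 * (pd i η x * (η x * u x)))
    push_cast
    linarith
  have := integral_mono (i1.const_mul (1 / 2)) (i3.add (i2.const_mul (8 * m * c ^ 2))) hpt
  simp only [Pi.add_apply] at this
  rw [integral_add i3 (i2.const_mul _), hdiv, integral_const_mul, integral_const_mul] at this
  linarith

/-- `Δ²w = 0` and `∇w ∈ L²` imply `Δw = 0`. -/
theorem lap_zero_of_bilap {m : ℕ} (hm : 0 < m) {w h : (Fin m → ℝ) → ℝ}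
    (hw : ContDiff ℝ (⊤ : ℕ∞) w)
    (hh : ContDiff ℝ (⊤ : ℕ∞) h) (hhw : ∀ x, ∑ i, pd i (pd i w) x = h x)
    (hΔ : ∀ x, ∑ i, pd i (pd i h) x = 0)
    (hE : Integrable (fun x => ∑ i, pd i w x ^ 2)) : ∀ x, h x = 0 := by
  have hm' : (0 : ℝ) < m := by exact_mod_cast hm
  suffices H : ∀ x, h x ^ 2 = 0 from fun x => by simpa using H x
  refine eq_zero_of_cut _ (hh.continuous.pow 2) (fun x => sq_nonneg _)
    (40 * m * ∫ x, ∑ i, pd i w x ^ 2) ?_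
  intro c hc η hη
  have hcac := caccioppoli hη hh hΔ
  have hdiv := cut_div hη hh hw 1
  have hc1 := hη.smooth.continuous
  have hc2 := hh.continuous
  have hc3 := fun i => (pd_smooth hh i).continuous
  have hc4 := fun i => (pd_smooth hη.smooth i).continuous
  have hc5 := fun i => (pd_smooth hw i).continuous
  have hc6 := fun i => (pd_smooth (pd_smooth hw i) i).continuous
  have i0 : Integrable (fun x => η x ^ 4 * h x ^ 2) := by
    refine (hη.integrable (G := fun x => η x ^ 3 * h x ^ 2) (by fun_prop)).congr
      (Filter.Eventually.of_forall fun x => ?_)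
    simp only; ring
  have i1 : Integrable (fun x => η x ^ 4 * ∑ i, pd i h x ^ 2) := by
    refine (hη.integrable (G := fun x => η x ^ 3 * ∑ i, pd i h x ^ 2) (by fun_prop)).congr
      (Filter.Eventually.of_forall fun x => ?_)
    simp only; ring
  have i2 : Integrable (fun x => η x ^ 2 * h x ^ 2) := by
    refine (hη.integrable (G := fun x => η x * h x ^ 2) (by fun_prop)).congr
      (Filter.Eventually.of_forall fun x => ?_)
    simp only; ring
  have i3 : Integrable (fun x => ∑ i, (η x ^ (1 + 1) * pd i h x * pd i w x
      + η x ^ (1 + 1) * h x * pd i (pd i w) x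
      + ((1 : ℕ) + 1) * η x ^ 1 * pd i η x * h x * pd i w x)) := by
    refine (hη.integrable (G := fun x => ∑ i, (η x ^ 1 * pd i h x * pd i w x
      + η x ^ 1 * h x * pd i (pd i w) x
      + ((1 : ℕ) + 1) * pd i η x * h x * pd i w x)) (by fun_prop)).congr
      (Filter.Eventually.of_forall fun x => ?_)
    simp only [Finset.mul_sum]
    exact Finset.sum_congr rfl fun i _ => by ring
  set δ : ℝ := 1 / (64 * m * c ^ 2) with hδ
  have hδ0 : 0 < δ := by positivity
  have hpt : ∀ x, (3 / 4) * (η x ^ 2 * h x ^ 2) ≤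
      (∑ i, (η x ^ (1 + 1) * pd i h x * pd i w x
      + η x ^ (1 + 1) * h x * pd i (pd i w) x
      + ((1 : ℕ) + 1) * η x ^ 1 * pd i η x * h x * pd i w x))
      + (δ * (η x ^ 4 * ∑ i, pd i h x ^ 2) + 20 * m * c ^ 2 * ∑ i, pd i w x ^ 2) := by
    intro x
    have e1 : ∑ i, (η x ^ (1 + 1) * h x * pd i (pd i w) x) = η x ^ 2 * h x ^ 2 := by
      rw [← Finset.mul_sum, hhw x]; ring
    have e2 : (1 / 4) * (η x ^ 2 * h x ^ 2)
        = ∑ _i : Fin m, (1 / (4 * m)) * (η x ^ 2 * h x ^ 2) := by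
      simp; field_simp
    have key : 0 ≤ (∑ i, (η x ^ (1 + 1) * pd i h x * pd i w x)
        + ∑ i, (((1 : ℕ) + 1) * η x ^ 1 * pd i η x * h x * pd i w x))
        + (δ * (η x ^ 4 * ∑ i, pd i h x ^ 2) + 20 * m * c ^ 2 * ∑ i, pd i w x ^ 2)
        + (1 / 4) * (η x ^ 2 * h x ^ 2) := by
      rw [e2, Finset.mul_sum, Finset.mul_sum, Finset.mul_sum, ← Finset.sum_add_distrib,
        ← Finset.sum_add_distrib, ← Finset.sum_add_distrib, ← Finset.sum_add_distrib]
      refine Finset.sum_nonneg fun i _ => ?_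
      have hg : pd i η x ^ 2 ≤ c ^ 2 := sq_le_sq.2 ((hη.grad i x).trans (le_abs_self c))
      have h1 : 4 * m * (pd i η x ^ 2 * pd i w x ^ 2) ≤ 4 * m * (c ^ 2 * pd i w x ^ 2) := by
        gcongr
      have h2 : 0 ≤ δ * (η x ^ 2 * pd i h x + 32 * m * c ^ 2 * pd i w x) ^ 2 := by positivity
      have h2' : δ * (η x ^ 2 * pd i h x + 32 * m * c ^ 2 * pd i w x) ^ 2
          = δ * (η x ^ 4 * pd i h x ^ 2) + η x ^ 2 * pd i h x * pd i w x
            + 16 * m * c ^ 2 * pd i w x ^ 2 := by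
        rw [hδ]; field_simp; ring
      have h3 : 0 ≤ 1 / (4 * m) * (η x * h x + 4 * m * (pd i η x * pd i w x)) ^ 2 := by
        positivity
      have h3' : 1 / (4 * m) * (η x * h x + 4 * m * (pd i η x * pd i w x)) ^ 2
          = 1 / (4 * m) * (η x ^ 2 * h x ^ 2) + 2 * η x * pd i η x * h x * pd i w x
            + 4 * m * (pd i η x ^ 2 * pd i w x ^ 2) := by
        field_simp; ring
      push_cast
      rw [h2'] at h2
      rw [h3'] at h3
      linarith
    rw [Finset.sum_add_distrib, Finset.sum_add_distrib, e1]
    linarith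
  have i4 : Integrable (fun x => δ * (η x ^ 4 * ∑ i, pd i h x ^ 2)
      + 20 * m * c ^ 2 * ∑ i, pd i w x ^ 2) := (i1.const_mul δ).add (hE.const_mul (20 * m * c ^ 2))
  have := integral_mono (i2.const_mul (3 / 4)) (i3.add i4) hpt
  simp only [Pi.add_apply] at this
  rw [integral_add i3 i4, hdiv, integral_const_mul] at this
  rw [integral_add (i1.const_mul δ) (hE.const_mul _), integral_const_mul,
    integral_const_mul] at this
  have h5 : δ * ∫ x, η x ^ 4 * ∑ i, pd i h x ^ 2 ≤ (1 / 4) * ∫ x, η x ^ 2 * h x ^ 2 := by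
    refine (mul_le_mul_of_nonneg_left hcac hδ0.le).trans (le_of_eq ?_)
    rw [hδ]; field_simp; ring
  have h6 : ∫ x, η x ^ 4 * h x ^ 2 ≤ ∫ x, η x ^ 2 * h x ^ 2 := by
    refine integral_mono i0 i2 fun x => ?_
    exact mul_le_mul_of_nonneg_right
      (pow_le_pow_of_le_one (hη.nonneg x) (hη.le_one x) (by norm_num)) (sq_nonneg _)
  linarith

theorem grad_zero_const {m : ℕ} {u : (Fin m → ℝ) → ℝ} (hu : ContDiff ℝ (⊤ : ℕ∞) u)
    (h : ∀ i x, pd i u x = 0) : ∀ x y, u x = u y := by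
  refine is_const_of_fderiv_eq_zero (𝕜 := ℝ) (smooth_diff hu) fun x => ?_
  refine ContinuousLinearMap.coe_injective (LinearMap.pi_ext' fun i => ?_)
  ext
  simpa [pd] using h i x

/-- Harmonic `L²` functions vanish. -/
theorem harmonic_L2_zero {m : ℕ} (hm : 0 < m) {u : (Fin m → ℝ) → ℝ}
    (hu : ContDiff ℝ (⊤ : ℕ∞) u) (hΔ : ∀ x, ∑ i, pd i (pd i u) x = 0)
    (hE : Integrable (fun x => u x ^ 2)) : ∀ x, u x = 0 := by
  have hc3 := fun i => (pd_smooth hu i).continuous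
  have hg : ∀ x, ∑ i, pd i u x ^ 2 = 0 := by
    refine eq_zero_of_cut (fun x => ∑ i, pd i u x ^ 2) (by fun_prop)
      (fun x => Finset.sum_nonneg fun i _ => sq_nonneg _) (16 * m * ∫ x, u x ^ 2) ?_
    intro c hc η hη
    refine (caccioppoli hη hu hΔ).trans ?_
    have hc1 := hη.smooth.continuous
    have hc2 := hu.continuous
    have i2 : Integrable (fun x => η x ^ 2 * u x ^ 2) := by
      refine (hη.integrable (G := fun x => η x * u x ^ 2) (by fun_prop)).congr
        (Filter.Eventually.of_forall fun x => ?_)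
      simp only; ring
    have : ∫ x, η x ^ 2 * u x ^ 2 ≤ ∫ x, u x ^ 2 := by
      refine integral_mono i2 hE fun x => ?_
      exact mul_le_of_le_one_left (sq_nonneg _) (pow_le_one₀ (hη.nonneg x) (hη.le_one x))
    have := mul_le_mul_of_nonneg_left this (by positivity : 0 ≤ 16 * (m : ℝ) * c ^ 2)
    linarith
  have hg' : ∀ i x, pd i u x = 0 := by
    intro i x
    have := (Finset.sum_eq_zero_iff_of_nonneg (fun i _ => sq_nonneg (pd i u x))).1 (hg x) i
      (Finset.mem_univ i)
    simpa using this
  have hconst := grad_zero_const hu hg'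
  intro x
  have he : (fun y => u y ^ 2) = fun _ => u x ^ 2 := by
    funext y; rw [hconst y x]
  rw [he] at hE
  have : Nonempty (Fin m) := ⟨⟨0, hm⟩⟩
  rcases integrable_const_iff.1 hE with h | h
  · simpa using h
  · exfalso
    have := h.measure_univ_lt_top
    simp at this

theorem lap_comp {m n : ℕ} {f : (Fin m → ℝ) → Fin n → ℝ} (hf : ContDiff ℝ (⊤ : ℕ∞) f)
    (α : Fin n) : (fun x => lap f x α) = fun x => ∑ i, pd i (pd i (fun y => f y α)) x := by
  funext x
  simp only [lap, Finset.sum_apply]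
  refine Finset.sum_congr rfl fun i _ => ?_
  rw [← pd_comp hf i α, ← pd_comp (pd_smooth hf i) i α]

theorem lap_smooth {m n : ℕ} {f : (Fin m → ℝ) → Fin n → ℝ} (hf : ContDiff ℝ (⊤ : ℕ∞) f) :
    ContDiff ℝ (⊤ : ℕ∞) (lap f) :=
  ContDiff.sum fun i _ => pd_smooth (pd_smooth hf i) i

end TriharmonicHelpers

/-- Flat Liouville theorem for triharmonic maps, constancy version: if `φ : ℝ^m → ℝ^n` is
smooth with `Δ³φ = 0`, the energies of `φ` up to third order derivatives are finite, and
`m > 2`, `m ≠ 6`, then `φ` is constant. -/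
theorem triharmonic_liouville_flat_constant {m n : ℕ}
    (φ : (Fin m → ℝ) → Fin n → ℝ) (hφ : ContDiff ℝ (⊤ : ℕ∞) φ)
    (htri : ∀ x, lap (lap (lap φ)) x = 0)
    (hE : Integrable (fun x =>
      (∑ i, ∑ α, (pd i φ x α) ^ 2) +
      (∑ i, ∑ j, ∑ α, (pd j (pd i φ) x α) ^ 2) +
      (∑ i, ∑ j, ∑ k, ∑ α, (pd k (pd j (pd i φ)) x α) ^ 2)))
    (hm2 : 2 < m) (hm6 : m ≠ 6) :
    ∀ x y, φ x = φ y := by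
  have hm : 0 < m := by omega
  have s1 := fun i => pd_smooth hφ i
  have s2 := fun i j => pd_smooth (s1 i) j
  have s3 := fun i j k => pd_smooth (s2 i j) k
  -- individual first and third derivatives are in `L²`
  have I1 : ∀ i α, Integrable (fun x => (pd i φ x α) ^ 2) := by
    intro i α
    refine hE.mono' (((continuous_apply α).comp (s1 i).continuous).pow 2).aestronglyMeasurable
      (Filter.Eventually.of_forall fun x => ?_)
    rw [Real.norm_of_nonneg (sq_nonneg _)]
    have a1 : (pd i φ x α) ^ 2 ≤ ∑ i, ∑ α, (pd i φ x α) ^ 2 :=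
      (Finset.single_le_sum (f := fun α => (pd i φ x α) ^ 2) (fun _ _ => sq_nonneg _)
        (Finset.mem_univ α)).trans
      (Finset.single_le_sum (f := fun i => ∑ α, (pd i φ x α) ^ 2)
        (fun _ _ => Finset.sum_nonneg fun _ _ => sq_nonneg _) (Finset.mem_univ i))
    have a2 : 0 ≤ ∑ i, ∑ j, ∑ α, (pd j (pd i φ) x α) ^ 2 :=
      Finset.sum_nonneg fun _ _ => Finset.sum_nonneg fun _ _ => Finset.sum_nonneg fun _ _ => sq_nonneg _
    have a3 : 0 ≤ ∑ i, ∑ j, ∑ k, ∑ α, (pd k (pd j (pd i φ)) x α) ^ 2 :=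
      Finset.sum_nonneg fun _ _ => Finset.sum_nonneg fun _ _ => Finset.sum_nonneg fun _ _ => Finset.sum_nonneg fun _ _ => sq_nonneg _
    linarith
  have I3 : ∀ i j k α, Integrable (fun x => (pd k (pd j (pd i φ)) x α) ^ 2) := by
    intro i j k α
    refine hE.mono' (((continuous_apply α).comp (s3 i j k).continuous).pow 2).aestronglyMeasurable
      (Filter.Eventually.of_forall fun x => ?_)
    rw [Real.norm_of_nonneg (sq_nonneg _)]
    have a1 : (pd k (pd j (pd i φ)) x α) ^ 2
        ≤ ∑ i, ∑ j, ∑ k, ∑ α, (pd k (pd j (pd i φ)) x α) ^ 2 :=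
      (((Finset.single_le_sum (f := fun α => (pd k (pd j (pd i φ)) x α) ^ 2)
        (fun _ _ => sq_nonneg _) (Finset.mem_univ α)).trans
      (Finset.single_le_sum (f := fun k => ∑ α, (pd k (pd j (pd i φ)) x α) ^ 2)
        (fun _ _ => Finset.sum_nonneg fun _ _ => sq_nonneg _) (Finset.mem_univ k))).trans
      (Finset.single_le_sum (f := fun j => ∑ k, ∑ α, (pd k (pd j (pd i φ)) x α) ^ 2)
        (fun _ _ => Finset.sum_nonneg fun _ _ => Finset.sum_nonneg fun _ _ => sq_nonneg _) (Finset.mem_univ j))).trans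
      (Finset.single_le_sum (f := fun i => ∑ j, ∑ k, ∑ α, (pd k (pd j (pd i φ)) x α) ^ 2)
        (fun _ _ => Finset.sum_nonneg fun _ _ => Finset.sum_nonneg fun _ _ => Finset.sum_nonneg fun _ _ => sq_nonneg _) (Finset.mem_univ i))
    have a2 : 0 ≤ ∑ i, ∑ j, ∑ α, (pd j (pd i φ) x α) ^ 2 :=
      Finset.sum_nonneg fun _ _ => Finset.sum_nonneg fun _ _ => Finset.sum_nonneg fun _ _ => sq_nonneg _
    have a3 : 0 ≤ ∑ i, ∑ α, (pd i φ x α) ^ 2 :=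
      Finset.sum_nonneg fun _ _ => Finset.sum_nonneg fun _ _ => sq_nonneg _
    linarith
  have comp_smooth : ∀ {f : (Fin m → ℝ) → Fin n → ℝ} (α : Fin n), ContDiff ℝ (⊤ : ℕ∞) f →
      ContDiff ℝ (⊤ : ℕ∞) (fun x => f x α) := fun α hf => contDiff_pi.1 hf α
  suffices H : ∀ α x y, φ x α = φ y α from fun x y => funext fun α => H α x y
  intro α
  have l1 := lap_smooth hφ
  have l2 := lap_smooth l1
  -- the Laplacian has square integrable gradient
  have J : ∀ k, Integrable (fun x => pd k (fun y => lap φ y α) x ^ 2) := by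
    intro k
    have e : ∀ x, pd k (fun y => lap φ y α) x = ∑ i, pd k (pd i (pd i φ)) x α := by
      intro x
      have : (fun y => lap φ y α) = fun y => ∑ i, pd i (pd i φ) y α := by
        funext y; simp [lap]
      rw [this, pd_sum (fun i => comp_smooth α (s2 i i))]
      refine Finset.sum_congr rfl fun i _ => ?_
      rw [← pd_comp (s2 i i) k α]
    have hI : Integrable (fun x => (m : ℝ) * ∑ i, (pd k (pd i (pd i φ)) x α) ^ 2) :=
      (integrable_finsetSum _ fun i _ => I3 i i k α).const_mul _
    refine hI.mono' ?_ (Filter.Eventually.of_forall fun x => ?_)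
    · exact ((pd_smooth (comp_smooth α l1) k).continuous.pow 2).aestronglyMeasurable
    · rw [Real.norm_of_nonneg (sq_nonneg _), e x]
      simpa using sq_sum_le_card_mul_sum_sq (s := (Finset.univ : Finset (Fin m)))
        (f := fun i => pd k (pd i (pd i φ)) x α)
  -- step 1: `Δ²φ = 0`
  have step1 : ∀ x, lap (lap φ) x α = 0 := by
    refine lap_zero_of_bilap hm (comp_smooth α l1) (comp_smooth α l2) ?_ ?_
      (integrable_finsetSum _ fun i _ => J i)
    · exact fun x => (congrFun (lap_comp l1 α) x).symm
    · intro x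
      rw [← congrFun (lap_comp l2 α) x, htri x]
      rfl
  -- step 2: `Δφ = 0`
  have step2 : ∀ x, lap φ x α = 0 := by
    refine lap_zero_of_bilap hm (comp_smooth α hφ) (comp_smooth α l1) ?_ ?_
      (integrable_finsetSum _ fun i _ => ?_)
    · exact fun x => (congrFun (lap_comp hφ α) x).symm
    · intro x
      rw [← congrFun (lap_comp l1 α) x, step1 x]
    · rw [← pd_comp hφ i α]
      exact I1 i α
  -- step 3: `∂ₖφ = 0`
  refine grad_zero_const (comp_smooth α hφ) fun k => ?_
  have hs := comp_smooth α hφ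
  refine harmonic_L2_zero hm (pd_smooth hs k) ?_ ?_
  · intro x
    have e : ∀ i, pd i (pd i (pd k (fun y => φ y α))) x
        = pd k (pd i (pd i (fun y => φ y α))) x := by
      intro i
      have : pd i (pd k (fun y => φ y α)) = pd k (pd i (fun y => φ y α)) :=
        funext fun y => pd_comm hs i k y
      rw [this, pd_comm (pd_smooth hs i)]
    simp_rw [e]
    rw [← pd_sum (fun i => pd_smooth (pd_smooth hs i) i), ← lap_comp hφ α]
    have : (fun x => lap φ x α) = fun _ => (0 : ℝ) := funext step2
    rw [this]
    simp [pd]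
  · rw [← pd_comp hφ k α]
    exact I1 k α
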